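/- arXiv:1705.00445 — 2 statements merged into one kernel-verified Lean document; each statement's English description precedes it below -/
import Mathlib

section
/- The map S_{γ0} is an involution: S_{γ0}∘S_{γ0} = id on F. Equivalently, substituting γ_0 ↦ −γ_0, z_0 ↦ Q_0, z_1 ↦ Q_1 (with z_2, z_12, β_0, ζ_0, μ_0 unchanged) into the rational functions Q_0 and Q_1 returns z_0 and z_1 respectively. -/
/-!
Over the subfield generated by the other indeterminates, `Q_0` is a Möbius transformation of `z_0` with some
matrix `M`, and the sign change `γ_0 ↦ -γ_0` turns `M` into its adjugate. Hence the second
application of `S` multiplies by `adj M * M = det M`, a scalar matrix, which is the identity as a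
Möbius transformation (`moebius_adjugate`). The case of `z_1` is the same with the off-diagonal
entries of `M` negated. What has to be checked is that `det M` and the denominators
do not vanish in `F`: each is a polynomial with a nonzero value at
`β_0 = z_2 = 1`, all other variables `0` (`algebraMap_ne_zero_of_eval`). Finally, a ring endomorphism
of `F` is determined by its values on the eight indeterminates (`hom_ext_Xv`).
-/

/-- `F = ℚ(β_0, γ_0, ζ_0, μ_0, z_0, z_1, z_2, z_12)`: the field of rational functions
in eight indeterminates over `ℚ`, realized as the fraction field of the polynomial
ring in eight variables. -/
abbrev F8 : Type := FractionRing (MvPolynomial (Fin 8) ℚ)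

/-- The eight indeterminates as elements of `F`; indices `0,…,7` correspond to
`β_0, γ_0, ζ_0, μ_0, z_0, z_1, z_2, z_12` respectively. -/
noncomputable def Xv (i : Fin 8) : F8 :=
  algebraMap (MvPolynomial (Fin 8) ℚ) F8 (MvPolynomial.X i)

/-- `β_0`. -/
noncomputable def vb0 : F8 := Xv 0
/-- `γ_0`. -/
noncomputable def vg0 : F8 := Xv 1
/-- `ζ_0`. -/
noncomputable def vz0 : F8 := Xv 2
/-- `μ_0`. -/
noncomputable def vm0 : F8 := Xv 3
/-- `z_0`. -/
noncomputable def w0 : F8 := Xv 4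
/-- `z_1`. -/
noncomputable def w1 : F8 := Xv 5
/-- `z_2`. -/
noncomputable def w2 : F8 := Xv 6
/-- `z_12`. -/
noncomputable def w12 : F8 := Xv 7

/-- `Q_0`, the image of `z_0` under `S_{γ0}`. -/
noncomputable def Q0 : F8 :=
  (2*vg0*w2*w12 - (vb0-vg0-vz0-vm0)*w0*w12 - (vb0+vg0+vz0-vm0)*w0*w2) /
  (2*vg0*w0 - (vb0+vg0-vz0-vm0)*w12 - (vb0-vg0+vz0-vm0)*w2)

/-- `Q_1`, the image of `z_1` under `S_{γ0}`. -/
noncomputable def Q1 : F8 :=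
  (2*vg0*w2*w12 + (vb0-vg0-vz0-vm0)*w1*w12 + (vb0+vg0+vz0-vm0)*w1*w2) /
  (2*vg0*w1 + (vb0+vg0-vz0-vm0)*w12 + (vb0-vg0+vz0-vm0)*w2)

/-- A polynomial expression in the indeterminates is nonzero in `F` as soon as it has a nonzero
value at some rational point. -/
lemma algebraMap_ne_zero_of_eval (p : MvPolynomial (Fin 8) ℚ) (v : Fin 8 → ℚ)
    (h : MvPolynomial.eval v p ≠ 0) : algebraMap (MvPolynomial (Fin 8) ℚ) F8 p ≠ 0 := by
  intro hp
  rw [map_eq_zero_iff _ (IsFractionRing.injective (MvPolynomial (Fin 8) ℚ) F8)] at hp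
  exact h (by rw [hp, map_zero])

lemma hom_ext_Xv (f g : F8 →+* F8) (h : ∀ i, f (Xv i) = g (Xv i)) : f = g := by
  apply IsLocalization.ringHom_ext (nonZeroDivisors (MvPolynomial (Fin 8) ℚ))
  apply MvPolynomial.ringHom_ext'
  · exact Subsingleton.elim _ _
  · exact h

/-- The Möbius transformation with matrix `!![-a, b; c, -d]` followed by the one with the adjugate
matrix `!![-d, -b; -c, -a]` is the identity. -/
lemma moebius_adjugate {K : Type*} [Field K] (a b c d x : K) (hdet : a * d - b * c ≠ 0)
    (hx : c * x - d ≠ 0) :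
    (-b - d * ((b - a * x) / (c * x - d))) / (-c * ((b - a * x) / (c * x - d)) - a) = x := by
  have h1 : -b - d * ((b - a * x) / (c * x - d)) = (a * d - b * c) * x / (c * x - d) := by
    rw [eq_div_iff hx, sub_mul, mul_assoc, div_mul_cancel₀ _ hx]
    ring
  have h2 : -c * ((b - a * x) / (c * x - d)) - a = (a * d - b * c) / (c * x - d) := by
    rw [eq_div_iff hx, sub_mul, mul_assoc, div_mul_cancel₀ _ hx]
    ring
  rw [h1, h2, div_div_div_cancel_right₀ hx, mul_div_cancel_left₀ _ hdet]

lemma det_ne_zero :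
    ((vb0-vg0-vz0-vm0)*w12 + (vb0+vg0+vz0-vm0)*w2) * ((vb0+vg0-vz0-vm0)*w12 + (vb0-vg0+vz0-vm0)*w2)
      - 2*vg0*w2*w12 * (2*vg0) ≠ 0 := by
  open MvPolynomial in
  have := algebraMap_ne_zero_of_eval
    (((X 0 - X 1 - X 2 - X 3)*X 7 + (X 0 + X 1 + X 2 - X 3)*X 6)
      * ((X 0 + X 1 - X 2 - X 3)*X 7 + (X 0 - X 1 + X 2 - X 3)*X 6)
      - 2*X 1*X 6*X 7 * (2*X 1)) ![1, 0, 0, 0, 0, 0, 1, 0] (by simp)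
  simpa only [vb0, vg0, vz0, vm0, w0, w1, w2, w12, Xv, map_sub, map_add, map_mul, map_ofNat] using this

lemma den0_ne_zero :
    2*vg0*w0 - ((vb0+vg0-vz0-vm0)*w12 + (vb0-vg0+vz0-vm0)*w2) ≠ 0 := by
  open MvPolynomial in
  have := algebraMap_ne_zero_of_eval
    (2*X 1*X 4 - ((X 0 + X 1 - X 2 - X 3)*X 7 + (X 0 - X 1 + X 2 - X 3)*X 6))
    ![1, 0, 0, 0, 0, 0, 1, 0] (by simp)
  simpa only [vb0, vg0, vz0, vm0, w0, w1, w2, w12, Xv, map_sub, map_add, map_mul, map_ofNat] using this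

lemma den1_ne_zero :
    -(2*vg0)*w1 - ((vb0+vg0-vz0-vm0)*w12 + (vb0-vg0+vz0-vm0)*w2) ≠ 0 := by
  open MvPolynomial in
  have := algebraMap_ne_zero_of_eval
    (-(2*X 1)*X 5 - ((X 0 + X 1 - X 2 - X 3)*X 7 + (X 0 - X 1 + X 2 - X 3)*X 6))
    ![1, 0, 0, 0, 0, 0, 1, 0] (by simp)
  simpa only [vb0, vg0, vz0, vm0, w0, w1, w2, w12, Xv, map_sub, map_add, map_mul, map_neg, map_ofNat] using this

/-- the map `S_{γ0}` — i.e. any ring homomorphism `F → F` acting on the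
generators by `γ_0 ↦ -γ_0`, `z_0 ↦ Q_0`, `z_1 ↦ Q_1` and fixing `β_0, ζ_0, μ_0, z_2, z_12` —
is an involution: `S_{γ0} ∘ S_{γ0} = id`. -/
theorem statement14 (S : F8 →+* F8)
    (hg : S vg0 = -vg0) (hb : S vb0 = vb0) (hz : S vz0 = vz0) (hm : S vm0 = vm0)
    (h0 : S w0 = Q0) (h1 : S w1 = Q1) (h2 : S w2 = w2) (h12 : S w12 = w12) :
    S.comp S = RingHom.id F8 := by
  have k0 : S Q0 = w0 := by
    have key := moebius_adjugate _ _ _ _ w0 det_ne_zero den0_ne_zero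
    have hQ : Q0 = (2*vg0*w2*w12 - ((vb0-vg0-vz0-vm0)*w12 + (vb0+vg0+vz0-vm0)*w2)*w0) /
        (2*vg0*w0 - ((vb0+vg0-vz0-vm0)*w12 + (vb0-vg0+vz0-vm0)*w2)) := by
      unfold Q0
      congr 1 <;> ring
    rw [← hQ] at key
    conv_lhs => unfold Q0
    simp only [map_div₀, map_sub, map_add, map_mul, map_ofNat, hg, hb, hz, hm, h0, h2, h12]
    refine Eq.trans ?_ key
    congr 1 <;> ring
  have k1 : S Q1 = w1 := by
    -- `Q_1` is the Möbius transformation of `z_1` obtained from `Q_0` by negating both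
    -- off-diagonal entries, after cancelling a common factor `-1`.
    have key := moebius_adjugate _ (-(2*vg0*w2*w12)) (-(2*vg0)) _ w1
      (by rw [neg_mul_neg]; exact det_ne_zero) den1_ne_zero
    have hQ : Q1 = (-(2*vg0*w2*w12) - ((vb0-vg0-vz0-vm0)*w12 + (vb0+vg0+vz0-vm0)*w2)*w1) /
        (-(2*vg0)*w1 - ((vb0+vg0-vz0-vm0)*w12 + (vb0-vg0+vz0-vm0)*w2)) := by
      unfold Q1
      rw [← neg_div_neg_eq]
      congr 1 <;> ring
    rw [← hQ] at key
    conv_lhs => unfold Q1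
    simp only [map_div₀, map_sub, map_add, map_mul, map_ofNat, hg, hb, hz, hm, h1, h2, h12]
    rw [← neg_div_neg_eq]
    refine Eq.trans ?_ key
    congr 1 <;> ring
  apply hom_ext_Xv
  intro i
  rw [RingHom.comp_apply, RingHom.id_apply]
  fin_cases i
  · change S (S vb0) = vb0
    rw [hb, hb]
  · change S (S vg0) = vg0
    rw [hg, map_neg, hg, neg_neg]
  · change S (S vz0) = vz0
    rw [hz, hz]
  · change S (S vm0) = vm0
    rw [hm, hm]
  · change S (S w0) = w0
    rw [h0, k0]
  · change S (S w1) = w1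
    rw [h1, k1]
  · change S (S w2) = w2
    rw [h2, h2]
  · change S (S w12) = w12
    rw [h12, h12]
end

section
/- On the lattice L, the maps ρ_1 and ρ_2 act by the following displacements: for every λ ∈ L^{(0)} ∪ L^{(12)}, ρ_1(λ) = λ + (−h_0−h_1+h_2+h_5), and for every λ ∈ L^{(1)} ∪ L^{(2)}, ρ_1(λ) = λ + (h_2−h_3−h_4−h_5); for every λ ∈ L^{(0)}, ρ_2(λ) = λ + (−h_0+h_4+h_5+h_6); for every λ ∈ L^{(1)}, ρ_2(λ) = λ + (h_1−h_3−h_5+h_6); for every λ ∈ L^{(2)}, ρ_2(λ) = λ + (h_1−h_3−h_5−h_6); and for every λ ∈ L^{(12)}, ρ_2(λ) = λ + (−h_0+h_4+h_5−h_6). -/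
/-!
Both `ρ_1` and `ρ_2` displace a vector `v` by an amount that depends only on the four integers
`a = v_0 + v_1 + v_2`, `b = v_2 + v_3 + v_4`, `v_5`, `v_6` (the lemmas `rho1_mulVec` and
`rho2_mulVec`). On the quadruple `(a, b, v_5, v_6)` the two maps act as
`(a, b, c, d) ↦ (b, a, a + b - c, d)` and `(a, b, c, d) ↦ (b, a, a + b - c, a + b - d)`, which are
involutions, so all even powers of `ρ_1` and `ρ_2` leave the quadruple unchanged. Hence it is
constant on each of the four sub-lattices, with the value it takes at `h_0`, `ρ_1 h_0`, `ρ_2 h_0`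
and `ρ_1 ρ_2 h_0` respectively, and the displacements are read off from these four values.
-/

open Matrix

/-- `P = ℤ^7`, the free `ℤ`-module with basis `h_0, …, h_6`. -/
abbrev P7 : Type := Fin 7 → ℤ

/-- The basis vector `h_i` of `P`. -/
def hv (i : Fin 7) : P7 := Pi.single i 1

/-- Matrix of `s_0` (columns = images of the basis vectors): `h_0 ↦ h_2 - h_0`. -/
def S0 : Matrix (Fin 7) (Fin 7) ℤ :=
  !![-1,0,0,0,0,0,0;
      0,1,0,0,0,0,0;
      1,0,1,0,0,0,0;
      0,0,0,1,0,0,0;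
      0,0,0,0,1,0,0;
      0,0,0,0,0,1,0;
      0,0,0,0,0,0,1]

/-- Matrix of `s_1`: `h_1 ↦ h_2 - h_1`. -/
def S1 : Matrix (Fin 7) (Fin 7) ℤ :=
  !![1,0,0,0,0,0,0;
     0,-1,0,0,0,0,0;
     0,1,1,0,0,0,0;
     0,0,0,1,0,0,0;
     0,0,0,0,1,0,0;
     0,0,0,0,0,1,0;
     0,0,0,0,0,0,1]

/-- Matrix of `s_2`: `h_2 ↦ h_0 + h_1 - h_2 + h_3 + h_4`. -/
def S2 : Matrix (Fin 7) (Fin 7) ℤ :=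
  !![1,0,1,0,0,0,0;
     0,1,1,0,0,0,0;
     0,0,-1,0,0,0,0;
     0,0,1,1,0,0,0;
     0,0,1,0,1,0,0;
     0,0,0,0,0,1,0;
     0,0,0,0,0,0,1]

/-- Matrix of `s_3`: `h_3 ↦ h_2 - h_3`. -/
def S3 : Matrix (Fin 7) (Fin 7) ℤ :=
  !![1,0,0,0,0,0,0;
     0,1,0,0,0,0,0;
     0,0,1,1,0,0,0;
     0,0,0,-1,0,0,0;
     0,0,0,0,1,0,0;
     0,0,0,0,0,1,0;
     0,0,0,0,0,0,1]

/-- Matrix of `s_4`: `h_4 ↦ h_2 - h_4`. -/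
def S4 : Matrix (Fin 7) (Fin 7) ℤ :=
  !![1,0,0,0,0,0,0;
     0,1,0,0,0,0,0;
     0,0,1,0,1,0,0;
     0,0,0,1,0,0,0;
     0,0,0,0,-1,0,0;
     0,0,0,0,0,1,0;
     0,0,0,0,0,0,1]

/-- Matrix of `σ_1`:
`(h_0,…,h_6) ↦ (h_1+h_5, h_0+h_5, h_2+2h_5, h_4+h_5, h_3+h_5, -h_5, h_6)`. -/
def Sig1 : Matrix (Fin 7) (Fin 7) ℤ :=
  !![0,1,0,0,0,0,0;
     1,0,0,0,0,0,0;
     0,0,1,0,0,0,0;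
     0,0,0,0,1,0,0;
     0,0,0,1,0,0,0;
     1,1,2,1,1,-1,0;
     0,0,0,0,0,0,1]

/-- Matrix of `σ_2`:
`(h_0,…,h_6) ↦ (h_3+h_6, h_4+h_6, h_2+2h_6, h_0+h_6, h_1+h_6, h_5, -h_6)`. -/
def Sig2 : Matrix (Fin 7) (Fin 7) ℤ :=
  !![0,0,0,1,0,0,0;
     0,0,0,0,1,0,0;
     0,0,1,0,0,0,0;
     1,0,0,0,0,0,0;
     0,1,0,0,0,0,0;
     0,0,0,0,0,1,0;
     1,1,2,1,1,0,-1]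

/-- `σ_3 = σ_1 ∘ σ_2`. -/
def Sig3 : Matrix (Fin 7) (Fin 7) ℤ := Sig1 * Sig2

/-- `s_0` on `P` as an invertible matrix (it is an involution). -/
def uS0 : (Matrix (Fin 7) (Fin 7) ℤ)ˣ := ⟨S0, S0, by decide, by decide⟩
/-- `s_1` on `P` as an invertible matrix. -/
def uS1 : (Matrix (Fin 7) (Fin 7) ℤ)ˣ := ⟨S1, S1, by decide, by decide⟩
/-- `s_2` on `P` as an invertible matrix. -/
def uS2 : (Matrix (Fin 7) (Fin 7) ℤ)ˣ := ⟨S2, S2, by decide, by decide⟩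
/-- `s_3` on `P` as an invertible matrix. -/
def uS3 : (Matrix (Fin 7) (Fin 7) ℤ)ˣ := ⟨S3, S3, by decide, by decide⟩
/-- `s_4` on `P` as an invertible matrix. -/
def uS4 : (Matrix (Fin 7) (Fin 7) ℤ)ˣ := ⟨S4, S4, by decide, by decide⟩
/-- `σ_1` on `P` as an invertible matrix. -/
def uSig1 : (Matrix (Fin 7) (Fin 7) ℤ)ˣ := ⟨Sig1, Sig1, by decide, by decide⟩
/-- `σ_2` on `P` as an invertible matrix. -/
def uSig2 : (Matrix (Fin 7) (Fin 7) ℤ)ˣ := ⟨Sig2, Sig2, by decide, by decide⟩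
/-- `σ_3 = σ_1 ∘ σ_2` on `P`. -/
def uSig3 : (Matrix (Fin 7) (Fin 7) ℤ)ˣ := uSig1 * uSig2

/-- `s_{β0} = s_4 s_3 s_1 s_0 s_2 s_4 s_3 s_1 s_0` on `P`. -/
def usb0 : (Matrix (Fin 7) (Fin 7) ℤ)ˣ := uS4 * uS3 * uS1 * uS0 * uS2 * uS4 * uS3 * uS1 * uS0
/-- `s_{γ0} = s_0 s_3 s_2 s_0 s_3` on `P`. -/
def usg0 : (Matrix (Fin 7) (Fin 7) ℤ)ˣ := uS0 * uS3 * uS2 * uS0 * uS3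
/-- `s_{ζ0} = σ_2 s_1 s_3 s_2 s_1 s_3 σ_2` on `P`. -/
def usz0 : (Matrix (Fin 7) (Fin 7) ℤ)ˣ := uSig2 * uS1 * uS3 * uS2 * uS1 * uS3 * uSig2
/-- `π_{βμ} = σ_1 s_4 s_3 s_1 s_0` on `P`. -/
def upbm : (Matrix (Fin 7) (Fin 7) ℤ)ˣ := uSig1 * uS4 * uS3 * uS1 * uS0
/-- `π_{γμ} = σ_3` on `P`. -/
def upgm : (Matrix (Fin 7) (Fin 7) ℤ)ˣ := uSig3
/-- `π_{ζμ} = σ_2` on `P`. -/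
def upzm : (Matrix (Fin 7) (Fin 7) ℤ)ˣ := uSig2
/-- `ρ_1 = s_{β0} π_{βμ}` on `P`. -/
def urho1 : (Matrix (Fin 7) (Fin 7) ℤ)ˣ := usb0 * upbm
/-- `ρ_2 = s_{γ0} π_{γμ}` on `P`. -/
def urho2 : (Matrix (Fin 7) (Fin 7) ℤ)ˣ := usg0 * upgm
/-- `ρ_0 = s_{ζ0} π_{ζμ}` on `P`. -/
def urho0 : (Matrix (Fin 7) (Fin 7) ℤ)ˣ := usz0 * upzm

/-- `L^{(0)} = { ρ_1^{2l_1} ρ_2^{2l_2}(h_0) : l_1, l_2 ∈ ℤ }`. -/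
def L0 : Set P7 :=
  {v | ∃ l1 l2 : ℤ,
    ((urho1 ^ (2*l1) * urho2 ^ (2*l2) : (Matrix (Fin 7) (Fin 7) ℤ)ˣ) :
      Matrix (Fin 7) (Fin 7) ℤ) *ᵥ hv 0 = v}

/-- `L^{(1)} = { ρ_1^{2l_1+1} ρ_2^{2l_2}(h_0) : l_1, l_2 ∈ ℤ }`. -/
def L1 : Set P7 :=
  {v | ∃ l1 l2 : ℤ,
    ((urho1 ^ (2*l1+1) * urho2 ^ (2*l2) : (Matrix (Fin 7) (Fin 7) ℤ)ˣ) :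
      Matrix (Fin 7) (Fin 7) ℤ) *ᵥ hv 0 = v}

/-- `L^{(2)} = { ρ_1^{2l_1} ρ_2^{2l_2+1}(h_0) : l_1, l_2 ∈ ℤ }`. -/
def L2 : Set P7 :=
  {v | ∃ l1 l2 : ℤ,
    ((urho1 ^ (2*l1) * urho2 ^ (2*l2+1) : (Matrix (Fin 7) (Fin 7) ℤ)ˣ) :
      Matrix (Fin 7) (Fin 7) ℤ) *ᵥ hv 0 = v}

/-- `L^{(12)} = { ρ_1^{2l_1+1} ρ_2^{2l_2+1}(h_0) : l_1, l_2 ∈ ℤ }`. -/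
def L12 : Set P7 :=
  {v | ∃ l1 l2 : ℤ,
    ((urho1 ^ (2*l1+1) * urho2 ^ (2*l2+1) : (Matrix (Fin 7) (Fin 7) ℤ)ˣ) :
      Matrix (Fin 7) (Fin 7) ℤ) *ᵥ hv 0 = v}

/-- `L = L^{(0)} ∪ L^{(1)} ∪ L^{(2)} ∪ L^{(12)}`. -/
def LL : Set P7 := L0 ∪ L1 ∪ L2 ∪ L12

/-- The displacement vector `v_0 = -h_0+h_1+h_3-h_4` of `ρ_0^2`. -/
def vv0 : P7 := ![-1,1,0,1,-1,0,0]
/-- The displacement vector `v_1 = -h_0-h_1+2h_2-h_3-h_4` of `ρ_1^2`. -/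
def vv1 : P7 := ![-1,-1,2,-1,-1,0,0]
/-- The displacement vector `v_2 = -h_0+h_1-h_3+h_4` of `ρ_2^2`. -/
def vv2 : P7 := ![-1,1,0,-1,1,0,0]

/-- The quadruple `(v_0 + v_1 + v_2, v_2 + v_3 + v_4, v_5, v_6)`, on which the displacements of `v`
under `ρ_1` and `ρ_2` depend. -/
def cls (v : P7) : ℤ × ℤ × ℤ × ℤ := (v 0 + v 1 + v 2, v 2 + v 3 + v 4, v 5, v 6)

/-- The action of `ρ_1` on the quadruples `cls v`. -/
def tau1 (q : ℤ × ℤ × ℤ × ℤ) : ℤ × ℤ × ℤ × ℤ :=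
  (q.2.1, q.1, q.1 + q.2.1 - q.2.2.1, q.2.2.2)

/-- The action of `ρ_2` on the quadruples `cls v`. -/
def tau2 (q : ℤ × ℤ × ℤ × ℤ) : ℤ × ℤ × ℤ × ℤ :=
  (q.2.1, q.1, q.1 + q.2.1 - q.2.2.1, q.1 + q.2.1 - q.2.2.2)

lemma P7_eta (v : P7) : v = ![v 0, v 1, v 2, v 3, v 4, v 5, v 6] := by
  ext i; fin_cases i <;> rfl

section Generators

variable (a b c d e f g : ℤ)

lemma S0_mulVec : S0 *ᵥ ![a, b, c, d, e, f, g] = ![-a, b, a + c, d, e, f, g] := by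
  ext i; fin_cases i <;> simp [S0, mulVec, dotProduct, Fin.sum_univ_succ]

lemma S1_mulVec : S1 *ᵥ ![a, b, c, d, e, f, g] = ![a, -b, b + c, d, e, f, g] := by
  ext i; fin_cases i <;> simp [S1, mulVec, dotProduct, Fin.sum_univ_succ]

lemma S2_mulVec :
    S2 *ᵥ ![a, b, c, d, e, f, g] = ![a + c, b + c, -c, c + d, c + e, f, g] := by
  ext i; fin_cases i <;> simp [S2, mulVec, dotProduct, Fin.sum_univ_succ]

lemma S3_mulVec : S3 *ᵥ ![a, b, c, d, e, f, g] = ![a, b, c + d, -d, e, f, g] := by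
  ext i; fin_cases i <;> simp [S3, mulVec, dotProduct, Fin.sum_univ_succ]

lemma S4_mulVec : S4 *ᵥ ![a, b, c, d, e, f, g] = ![a, b, c + e, d, -e, f, g] := by
  ext i; fin_cases i <;> simp [S4, mulVec, dotProduct, Fin.sum_univ_succ]

lemma Sig1_mulVec :
    Sig1 *ᵥ ![a, b, c, d, e, f, g] = ![b, a, c, e, d, a + b + 2 * c + d + e - f, g] := by
  ext i; fin_cases i <;> simp [Sig1, mulVec, dotProduct, Fin.sum_univ_succ]
  ring

lemma Sig2_mulVec :
    Sig2 *ᵥ ![a, b, c, d, e, f, g] = ![d, e, c, a, b, f, a + b + 2 * c + d + e - g] := by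
  ext i; fin_cases i <;> simp [Sig2, mulVec, dotProduct, Fin.sum_univ_succ]
  ring

end Generators

/-- `ρ_1` displaces `v` by a vector determined by `cls v`. -/
lemma rho1_mulVec (v : P7) :
    (urho1 : Matrix (Fin 7) (Fin 7) ℤ) *ᵥ v =
      v + ![-(cls v).1, -(cls v).1, (cls v).1 + (cls v).2.1, -(cls v).2.1, -(cls v).2.1,
        (cls v).1 + (cls v).2.1 - 2 * (cls v).2.2.1, 0] := by
  rw [P7_eta v]
  simp only [urho1, usb0, upbm, uS0, uS1, uS2, uS3, uS4, uSig1, Units.val_mul, ← mulVec_mulVec,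
    S0_mulVec, S1_mulVec, S2_mulVec, S3_mulVec, S4_mulVec, Sig1_mulVec]
  ext i
  fin_cases i <;> simp [cls] <;> ring

/-- `ρ_2` displaces `v` by a vector determined by `cls v`. -/
lemma rho2_mulVec (v : P7) :
    (urho2 : Matrix (Fin 7) (Fin 7) ℤ) *ᵥ v =
      v + ![-(cls v).1, (cls v).2.1, 0, -(cls v).2.1, (cls v).1,
        (cls v).1 + (cls v).2.1 - 2 * (cls v).2.2.1,
        (cls v).1 + (cls v).2.1 - 2 * (cls v).2.2.2] := by
  rw [P7_eta v]
  simp only [urho2, usg0, upgm, uSig3, uS0, uS2, uS3, uSig1, uSig2, Units.val_mul,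
    ← mulVec_mulVec, S0_mulVec, S2_mulVec, S3_mulVec, Sig1_mulVec, Sig2_mulVec]
  ext i
  fin_cases i <;> simp [cls] <;> ring

lemma cls_rho1 (v : P7) :
    cls ((urho1 : Matrix (Fin 7) (Fin 7) ℤ) *ᵥ v) = tau1 (cls v) := by
  rw [rho1_mulVec]
  simp only [cls, tau1, Pi.add_apply, Prod.mk.injEq]
  simp
  refine ⟨?_, ?_, ?_⟩ <;> ring

lemma cls_rho2 (v : P7) :
    cls ((urho2 : Matrix (Fin 7) (Fin 7) ℤ) *ᵥ v) = tau2 (cls v) := by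
  rw [rho2_mulVec]
  simp only [cls, tau2, Pi.add_apply, Prod.mk.injEq]
  simp
  refine ⟨?_, ?_, ?_, ?_⟩ <;> ring

lemma tau1_tau1 (q : ℤ × ℤ × ℤ × ℤ) : tau1 (tau1 q) = q := by
  ext <;> simp [tau1]
  ring

lemma tau2_tau2 (q : ℤ × ℤ × ℤ × ℤ) : tau2 (tau2 q) = q := by
  ext <;> simp [tau2] <;> ring

/-- If `u` acts on the quadruples through an involution, then every even power of `u`, negative ones
included, preserves them. -/
lemma cls_zpow_two_mul (u : (Matrix (Fin 7) (Fin 7) ℤ)ˣ) (t : ℤ × ℤ × ℤ × ℤ → ℤ × ℤ × ℤ × ℤ)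
    (hu : ∀ v, cls ((u : Matrix (Fin 7) (Fin 7) ℤ) *ᵥ v) = t (cls v)) (ht : ∀ q, t (t q) = q)
    (l : ℤ) (v : P7) :
    cls (((u ^ (2 * l) : (Matrix (Fin 7) (Fin 7) ℤ)ˣ) : Matrix (Fin 7) (Fin 7) ℤ) *ᵥ v) =
      cls v := by
  have step (k : ℤ) :
      cls (((u ^ (2 * (k + 1)) : (Matrix (Fin 7) (Fin 7) ℤ)ˣ) :
        Matrix (Fin 7) (Fin 7) ℤ) *ᵥ v) =
      cls (((u ^ (2 * k) : (Matrix (Fin 7) (Fin 7) ℤ)ˣ) : Matrix (Fin 7) (Fin 7) ℤ) *ᵥ v) := by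
    -- Split off the new factors on the left, next to `cls`, where `hu` applies.
    rw [show 2 * (k + 1) = 1 + (1 + 2 * k) by ring, _root_.zpow_add, _root_.zpow_add,
      _root_.zpow_one, Units.val_mul, Units.val_mul, ← mulVec_mulVec, ← mulVec_mulVec, hu, hu, ht]
  induction l using Int.induction_on with
  | zero => simp
  | succ n ih => rw [step, ih]
  | pred n ih => rw [← step, sub_add_cancel, ih]

lemma cls_rho1_even (l : ℤ) (v : P7) :
    cls (((urho1 ^ (2 * l) : (Matrix (Fin 7) (Fin 7) ℤ)ˣ) : Matrix (Fin 7) (Fin 7) ℤ) *ᵥ v) =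
      cls v :=
  cls_zpow_two_mul urho1 tau1 cls_rho1 tau1_tau1 l v

lemma cls_rho2_even (l : ℤ) (v : P7) :
    cls (((urho2 ^ (2 * l) : (Matrix (Fin 7) (Fin 7) ℤ)ˣ) : Matrix (Fin 7) (Fin 7) ℤ) *ᵥ v) =
      cls v :=
  cls_zpow_two_mul urho2 tau2 cls_rho2 tau2_tau2 l v

lemma cls_hv_zero : cls (hv 0) = (1, 0, 0, 0) := by decide

lemma cls_of_mem_L0 {v : P7} (h : v ∈ L0) : cls v = (1, 0, 0, 0) := by
  obtain ⟨l1, l2, rfl⟩ := h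
  rw [Units.val_mul, ← mulVec_mulVec, cls_rho1_even, cls_rho2_even, cls_hv_zero]

lemma cls_of_mem_L1 {v : P7} (h : v ∈ L1) : cls v = (0, 1, 1, 0) := by
  obtain ⟨l1, l2, rfl⟩ := h
  rw [_root_.zpow_add_one, Units.val_mul, Units.val_mul, ← mulVec_mulVec, ← mulVec_mulVec,
    cls_rho1_even, cls_rho1, cls_rho2_even, cls_hv_zero]
  rfl

lemma cls_of_mem_L2 {v : P7} (h : v ∈ L2) : cls v = (0, 1, 1, 1) := by
  obtain ⟨l1, l2, rfl⟩ := h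
  rw [_root_.zpow_add_one, Units.val_mul, Units.val_mul, ← mulVec_mulVec, ← mulVec_mulVec,
    cls_rho1_even, cls_rho2_even, cls_rho2, cls_hv_zero]
  rfl

lemma cls_of_mem_L12 {v : P7} (h : v ∈ L12) : cls v = (1, 0, 0, 1) := by
  obtain ⟨l1, l2, rfl⟩ := h
  rw [_root_.zpow_add_one, _root_.zpow_add_one, Units.val_mul, Units.val_mul, Units.val_mul, ← mulVec_mulVec,
    ← mulVec_mulVec, ← mulVec_mulVec, cls_rho1_even, cls_rho1, cls_rho2_even, cls_rho2,
    cls_hv_zero]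
  rfl

/-- the displacements of `ρ_1` and `ρ_2` on the sub-lattices of `L`:
`ρ_1` acts by `-h_0-h_1+h_2+h_5` on `L^{(0)} ∪ L^{(12)}` and by `h_2-h_3-h_4-h_5` on
`L^{(1)} ∪ L^{(2)}`; `ρ_2` acts by `-h_0+h_4+h_5+h_6` on `L^{(0)}`, by
`h_1-h_3-h_5+h_6` on `L^{(1)}`, by `h_1-h_3-h_5-h_6` on `L^{(2)}`, and by
`-h_0+h_4+h_5-h_6` on `L^{(12)}`. -/
theorem statement19 :
    (∀ v ∈ L0 ∪ L12,
      ((urho1 : Matrix (Fin 7) (Fin 7) ℤ)) *ᵥ v = v + (- hv 0 - hv 1 + hv 2 + hv 5)) ∧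
    (∀ v ∈ L1 ∪ L2,
      ((urho1 : Matrix (Fin 7) (Fin 7) ℤ)) *ᵥ v = v + (hv 2 - hv 3 - hv 4 - hv 5)) ∧
    (∀ v ∈ L0,
      ((urho2 : Matrix (Fin 7) (Fin 7) ℤ)) *ᵥ v = v + (- hv 0 + hv 4 + hv 5 + hv 6)) ∧
    (∀ v ∈ L1,
      ((urho2 : Matrix (Fin 7) (Fin 7) ℤ)) *ᵥ v = v + (hv 1 - hv 3 - hv 5 + hv 6)) ∧
    (∀ v ∈ L2,
      ((urho2 : Matrix (Fin 7) (Fin 7) ℤ)) *ᵥ v = v + (hv 1 - hv 3 - hv 5 - hv 6)) ∧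
    (∀ v ∈ L12,
      ((urho2 : Matrix (Fin 7) (Fin 7) ℤ)) *ᵥ v = v + (- hv 0 + hv 4 + hv 5 - hv 6)) := by
  refine ⟨?_, ?_, ?_, ?_, ?_, ?_⟩
  · rintro v (h | h)
    · rw [rho1_mulVec, cls_of_mem_L0 h]; congr 1; decide
    · rw [rho1_mulVec, cls_of_mem_L12 h]; congr 1; decide
  · rintro v (h | h)
    · rw [rho1_mulVec, cls_of_mem_L1 h]; congr 1; decide
    · rw [rho1_mulVec, cls_of_mem_L2 h]; congr 1; decide
  · intro v h
    rw [rho2_mulVec, cls_of_mem_L0 h]; congr 1; decide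
  · intro v h
    rw [rho2_mulVec, cls_of_mem_L1 h]; congr 1; decide
  · intro v h
    rw [rho2_mulVec, cls_of_mem_L2 h]; congr 1; decide
  · intro v h
    rw [rho2_mulVec, cls_of_mem_L12 h]; congr 1; decide
end
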